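/- arXiv:1205.5424 — 2 statements merged into one kernel-verified Lean document; each statement's English description precedes it below -/
import Mathlib

section
/- Let M and M' be matroids on the same finite ground set E, with rank functions r and r'. Then the following are equivalent: (i) every circuit of M is a union of circuits of M', i.e. every element of a circuit C of M lies in some circuit of M' contained in C; (iv) for all Y ⊆ X ⊆ E, one has r'(X) - r'(Y) ≤ r(X) - r(Y). -/
open Set

/-- The rank of a set in a matroid: the largest cardinality of an independent subset. -/
noncomputable def Matroid.rk' {α : Type*} (M : Matroid α) (X : Set α) : ℕ :=
  sSup {n | ∃ I, M.Indep I ∧ I ⊆ X ∧ I.ncard = n}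

/-- A circuit of a matroid is a minimal dependent set. -/
def Matroid.IsCircuit' {α : Type*} (M : Matroid α) (C : Set α) : Prop :=
  Minimal M.Dep C

/-! The closure operators mediate between the two conditions. Circuits generate closure, so every
circuit of `M` is a union of circuits of `M'` exactly when `M.closure X ⊆ M'.closure X` for all `X`
(`M'` is a *quotient* of `M`). If this holds and `Y ⊆ X`, choose `D` with
`M.eRk Y + D.encard = M.eRk X` such that `Y ∪ D` spans `X` in `M`; it then spans `X` in `M'` too,
so `M'.eRk X ≤ M'.eRk Y + D.encard`. Conversely, deleting an element `e` from a finite circuit `C`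
of `M` does not lower the rank in `M`, hence not in `M'`, so `e` lies in the `M'`-closure of
`C \ {e}` and thus in a circuit of `M'` contained in `C`. -/

section

variable {α : Type*} {M M' : Matroid α} {C X Y : Set α} {e : α}

theorem mem_closure_sdiff_singleton_iff_exists_isCircuit (he : e ∈ X) :
    e ∈ M.closure (X \ {e}) ↔ ∃ C, M.IsCircuit C ∧ e ∈ C ∧ C ⊆ X := by
  rw [Matroid.mem_closure_iff_exists_isCircuit (by simp), insert_sdiff_self_of_mem he]
  tauto

theorem closure_le_closure_iff_forall_isCircuit (hE : M.E ⊆ M'.E) :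
    M.closure ≤ M'.closure ↔ ∀ C, M.IsCircuit C → ∀ e ∈ C, e ∈ M'.closure (C \ {e}) := by
  refine ⟨fun h C hC e he ↦ h _ (hC.mem_closure_sdiff_singleton_of_mem he), fun h X e he ↦ ?_⟩
  have heE : e ∈ M'.E := hE (M.mem_ground_of_mem_closure he)
  by_cases heX : e ∈ X
  · exact M'.mem_closure_of_mem' heX heE
  obtain ⟨C, hCX, hC, heC⟩ := Matroid.exists_isCircuit_of_mem_closure he heX
  exact M'.closure_subset_closure (sdiff_singleton_subset_iff.2 hCX) (h C hC e heC)

theorem exists_eRk_add_encard_eq_and_subset_closure_union (hYX : Y ⊆ X) (hX : X ⊆ M.E) :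
    ∃ D, M.eRk Y + D.encard = M.eRk X ∧ X ⊆ M.closure (Y ∪ D) := by
  obtain ⟨I, hI⟩ := M.exists_isBasis Y (hYX.trans hX)
  obtain ⟨J, hJ, hIJ⟩ := hI.indep.subset_isBasis_of_subset (hI.subset.trans hYX)
  refine ⟨J \ I, ?_, hJ.subset_closure.trans (M.closure_subset_closure ?_)⟩
  · rw [← hI.encard_eq_eRk, ← hJ.encard_eq_eRk, add_comm, encard_sdiff_add_encard_of_subset hIJ]
  · exact sdiff_subset_iff.1 (sdiff_subset_sdiff_right hI.subset)

theorem eRk_add_eRk_le_of_closure_le_closure (h : M.closure ≤ M'.closure) (hYX : Y ⊆ X)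
    (hX : X ⊆ M.E) : M'.eRk X + M.eRk Y ≤ M.eRk X + M'.eRk Y := by
  obtain ⟨D, hD, hXD⟩ := exists_eRk_add_encard_eq_and_subset_closure_union hYX hX
  have hX' : M'.eRk X ≤ M'.eRk Y + D.encard := calc
    M'.eRk X ≤ M'.eRk (M'.closure (Y ∪ D)) := M'.eRk_mono (hXD.trans (h _))
    _ = M'.eRk (Y ∪ D) := M'.eRk_closure_eq _
    _ ≤ M'.eRk Y + D.encard := M'.eRk_union_le_eRk_add_encard Y D
  calc
    M'.eRk X + M.eRk Y ≤ (M'.eRk Y + D.encard) + M.eRk Y := by gcongr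
    _ = M.eRk X + M'.eRk Y := by rw [← hD]; ring

theorem mem_closure_sdiff_singleton_of_eRk_add_eRk_le (hC : M.IsCircuit C) (hfin : C.Finite)
    (hCE : C ⊆ M'.E) (he : e ∈ C)
    (h : M'.eRk C + M.eRk (C \ {e}) ≤ M.eRk C + M'.eRk (C \ {e})) :
    e ∈ M'.closure (C \ {e}) := by
  have hrank : M.eRk (C \ {e}) = M.eRk C := by
    rw [← M.eRk_closure_eq, hC.closure_sdiff_singleton_eq, M.eRk_closure_eq]
  have hrank_le : M'.eRk C ≤ M'.eRk (C \ {e}) := by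
    rw [hrank, add_comm] at h
    exact (ENat.add_le_add_iff_left (M.isRkFinite_of_finite hfin).eRk_lt_top.ne).1 h
  rw [((M'.isRkFinite_of_finite hfin).diff).closure_eq_closure_of_subset_of_eRk_ge_eRk
    sdiff_subset hrank_le]
  exact M'.mem_closure_of_mem he

theorem closure_le_closure_iff_eRk_add_eRk_le [M.Finitary] (hE : M.E ⊆ M'.E) :
    M.closure ≤ M'.closure ↔
      ∀ ⦃Y X : Set α⦄, Y ⊆ X → X ⊆ M.E → M'.eRk X + M.eRk Y ≤ M.eRk X + M'.eRk Y := by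
  refine ⟨fun h Y X ↦ eRk_add_eRk_le_of_closure_le_closure h, fun h ↦ ?_⟩
  refine (closure_le_closure_iff_forall_isCircuit hE).2 fun C hC e he ↦ ?_
  exact mem_closure_sdiff_singleton_of_eRk_add_eRk_le hC hC.finite (hC.subset_ground.trans hE) he
    (h sdiff_subset hC.subset_ground)

theorem natCast_rk' (hX : M.IsRkFinite X) : (M.rk' X : ℕ∞) = M.eRk X := by
  obtain ⟨I, hI, hIfin⟩ := hX.exists_finite_isBasis'
  have hrk : M.rk' X = I.ncard := by
    refine IsGreatest.csSup_eq ⟨⟨I, hI.indep, hI.subset, rfl⟩, ?_⟩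
    rintro _ ⟨J, hJ, hJX, rfl⟩
    have hJI : J.encard ≤ I.ncard := by
      rw [hIfin.cast_ncard_eq, hI.encard_eq_eRk]
      exact hJ.encard_le_eRk_of_subset hJX
    exact (encard_le_coe_iff_finite_ncard_le.1 hJI).2
  rw [hrk, hIfin.cast_ncard_eq, hI.encard_eq_eRk]

theorem rk'_sub_rk'_le_iff [M.RankFinite] [M'.RankFinite] :
    (M'.rk' X : ℤ) - M'.rk' Y ≤ (M.rk' X : ℤ) - M.rk' Y ↔
      M'.eRk X + M.eRk Y ≤ M.eRk X + M'.eRk Y := by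
  simp only [← natCast_rk' (Matroid.isRkFinite_set _ _), sub_le_sub_iff]
  norm_cast

end

theorem statement1_general {α : Type*} (M M' : Matroid α) [M.Finitary] (hE : M.E ⊆ M'.E) :
    (∀ C : Set α, M.IsCircuit C → ∀ e ∈ C, ∃ C' : Set α, M'.IsCircuit C' ∧ e ∈ C' ∧ C' ⊆ C) ↔
      ∀ ⦃Y X : Set α⦄, Y ⊆ X → X ⊆ M.E → M'.eRk X + M.eRk Y ≤ M.eRk X + M'.eRk Y := by
  rw [← closure_le_closure_iff_eRk_add_eRk_le hE, closure_le_closure_iff_forall_isCircuit hE]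
  exact forall₄_congr fun _ _ _ he ↦ (mem_closure_sdiff_singleton_iff_exists_isCircuit he).symm

/-- for matroids `M`, `M'` on the same finite ground set, the condition that every
circuit of `M` is a union of circuits of `M'` is equivalent to the rank inequality
`r'(X) - r'(Y) ≤ r(X) - r(Y)` for all `Y ⊆ X ⊆ E`. -/
theorem statement1 {α : Type*} (M M' : Matroid α) (hE : M.E = M'.E) (hfin : M.E.Finite) :
    (∀ C : Set α, M.IsCircuit' C → ∀ e ∈ C, ∃ C' : Set α, M'.IsCircuit' C' ∧ e ∈ C' ∧ C' ⊆ C) ↔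
      (∀ ⦃Y X : Set α⦄, Y ⊆ X → X ⊆ M.E →
        (M'.rk' X : ℤ) - M'.rk' Y ≤ (M.rk' X : ℤ) - M.rk' Y) := by
  have : M.Finite := ⟨hfin⟩
  have : M'.Finite := ⟨hE ▸ hfin⟩
  simp only [rk'_sub_rk'_le_iff]
  exact statement1_general M M' hE.subset
end

section
/- (2-variable orientation-activity expansion, realizable case.) For every vector configuration v : Fin n → V and all real numbers x, y: t(2x, 2y) = ∑_{A ⊆ Fin n} x^{o*(A)} · y^{o(A)}. -/
open Set Submodule

/-- The reorientation of the vector configuration `v` on the subset `A`: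
vectors indexed by `A` are negated. -/
def reorient {n : ℕ} {V : Type*} [AddCommGroup V] (v : Fin n → V) (A : Finset (Fin n)) :
    Fin n → V :=
  fun i => if i ∈ A then -v i else v i

/-- `a` is orientation-active for the configuration `w`: it is the smallest element of a
positive circuit, i.e. there is a nonnegative linear dependence with positive coefficient
at `a` and zero coefficients below `a`. -/
def OActive {n : ℕ} {V : Type*} [AddCommGroup V] [Module ℝ V]
    (w : Fin n → V) (a : Fin n) : Prop :=
  ∃ c : Fin n → ℝ, (∀ i, 0 ≤ c i) ∧ (∑ i, c i • w i) = 0 ∧ 0 < c a ∧ ∀ i < a, c i = 0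

/-- `a` is dually orientation-active for the configuration `w`: it is the smallest element of
a positive cocircuit, i.e. there is a linear functional, nonnegative on the configuration,
positive at `w a` and vanishing on the vectors below `a`. -/
def ODualActive {n : ℕ} {V : Type*} [AddCommGroup V] [Module ℝ V]
    (w : Fin n → V) (a : Fin n) : Prop :=
  ∃ f : V →ₗ[ℝ] ℝ, (∀ i, 0 ≤ f (w i)) ∧ 0 < f (w a) ∧ ∀ i < a, f (w i) = 0

/-- `θ*(A)`: the number of elements outside `A` that are dually orientation-active for `v_A`. -/
noncomputable def thetaStar {n : ℕ} {V : Type*} [AddCommGroup V] [Module ℝ V]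
    (v : Fin n → V) (A : Finset (Fin n)) : ℕ :=
  {a : Fin n | a ∉ A ∧ ODualActive (reorient v A) a}.ncard

/-- `θ̄*(A)`: the number of elements of `A` that are dually orientation-active for `v_A`. -/
noncomputable def thetaStarBar {n : ℕ} {V : Type*} [AddCommGroup V] [Module ℝ V]
    (v : Fin n → V) (A : Finset (Fin n)) : ℕ :=
  {a : Fin n | a ∈ A ∧ ODualActive (reorient v A) a}.ncard

/-- `θ(A)`: the number of elements outside `A` that are orientation-active for `v_A`. -/
noncomputable def theta {n : ℕ} {V : Type*} [AddCommGroup V] [Module ℝ V]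
    (v : Fin n → V) (A : Finset (Fin n)) : ℕ :=
  {a : Fin n | a ∉ A ∧ OActive (reorient v A) a}.ncard

/-- `θ̄(A)`: the number of elements of `A` that are orientation-active for `v_A`. -/
noncomputable def thetaBar {n : ℕ} {V : Type*} [AddCommGroup V] [Module ℝ V]
    (v : Fin n → V) (A : Finset (Fin n)) : ℕ :=
  {a : Fin n | a ∈ A ∧ OActive (reorient v A) a}.ncard

/-- The rank of a set of indices: the dimension of the span of the corresponding vectors. -/
noncomputable def vrank {n : ℕ} {V : Type*} [AddCommGroup V] [Module ℝ V]
    (v : Fin n → V) (S : Set (Fin n)) : ℕ :=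
  Module.finrank ℝ ↥(span ℝ (v '' S))

/-- The Tutte polynomial of the matroid realized by the configuration `v`:
`t(x,y) = ∑_{A ⊆ Fin n} (x-1)^(r(E) - r(A)) * (y-1)^(|A| - r(A))`. -/
noncomputable def tutteV {n : ℕ} {V : Type*} [AddCommGroup V] [Module ℝ V]
    (v : Fin n → V) (x y : ℝ) : ℝ :=
  ∑ A : Finset (Fin n),
    (x - 1) ^ (vrank v Set.univ - vrank v ↑A) * (y - 1) ^ (A.card - vrank v ↑A)

/-- `o(A)`: the number of orientation-active elements for the reorientation `v_A`. -/
noncomputable def oCount {n : ℕ} {V : Type*} [AddCommGroup V] [Module ℝ V]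
    (v : Fin n → V) (A : Finset (Fin n)) : ℕ :=
  {a : Fin n | OActive (reorient v A) a}.ncard

/-- `o*(A)`: the number of dually orientation-active elements for the reorientation `v_A`. -/
noncomputable def oStarCount {n : ℕ} {V : Type*} [AddCommGroup V] [Module ℝ V]
    (v : Fin n → V) (A : Finset (Fin n)) : ℕ :=
  {a : Fin n | ODualActive (reorient v A) a}.ncard

/-!
Both `t(2x, 2y)` and the sum obey the same recursion on the last vector `u`, through the deletion
and the contraction of `u`. For the sum, fix a reorientation of the other vectors and compare the
two signs of `u`. By a positive combination cancelling `u`, the two sets of orientation-active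
elements other than `u` are nested, the smaller one being that of the deletion and the larger one
that of the contraction; for the dually active elements it is the other way round. Orthogonality
of relations and functionals makes the two nestings opposite, so that one sign of `u` has the
activities of the deletion and the other those of the contraction. The vector `u` itself, being
last, is active only as a loop and dually active only as a coloop.
-/

section ActiveSet

variable {ι 𝕜 : Type*} [LinearOrder ι] [CommRing 𝕜] [LinearOrder 𝕜]

/-- The vector `c` is nonnegative and its first nonzero entry is at `a`: the common shape of the
coefficients of a positive circuit and of the values of a positive cocircuit with smallest
element `a`. -/
structure LeadsAt (c : ι → 𝕜) (a : ι) : Prop where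
  nonneg : 0 ≤ c
  pos : 0 < c a
  eq_zero_of_lt : ∀ i < a, c i = 0

/-- The indices at which the first component of some element of `L` leads, the last coordinate
being confined to `C`. With `L` the relations of a configuration extended by a vector `u`, the
choices `C = Ici 0` and `C = Iic 0` give the activities of the two orientations of `u`, while
`C = {0}` and `C = univ` give those of the deletion and of the contraction of `u`. For covectors
the last two exchange their roles. -/
def activeSet (L : Submodule 𝕜 ((ι → 𝕜) × 𝕜)) (C : Set 𝕜) : Set ι :=
  {a | ∃ p ∈ L, LeadsAt p.1 a ∧ p.2 ∈ C}

lemma activeSet_mono (L : Submodule 𝕜 ((ι → 𝕜) × 𝕜)) {C D : Set 𝕜} (h : C ⊆ D) :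
    activeSet L C ⊆ activeSet L D :=
  fun _ ⟨p, hp, hlead, hC⟩ => ⟨p, hp, hlead, h hC⟩

lemma activeSet_union (L : Submodule 𝕜 ((ι → 𝕜) × 𝕜)) (C D : Set 𝕜) :
    activeSet L (C ∪ D) = activeSet L C ∪ activeSet L D := by
  refine Subset.antisymm ?_ (union_subset (activeSet_mono L subset_union_left)
    (activeSet_mono L subset_union_right))
  rintro a ⟨p, hp, hlead, hC | hD⟩
  exacts [Or.inl ⟨p, hp, hlead, hC⟩, Or.inr ⟨p, hp, hlead, hD⟩]

lemma activeSet_univ (L : Submodule 𝕜 ((ι → 𝕜) × 𝕜)) :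
    activeSet L univ = activeSet L (Ici 0) ∪ activeSet L (Iic 0) := by
  rw [← activeSet_union, union_comm, Iic_union_Ici]

variable [IsStrictOrderedRing 𝕜]

lemma eq_zero_or_eq_zero_of_dotProduct_add_mul_eq_zero {κ : Type*} [Fintype κ] {c d : κ → 𝕜}
    {s t : 𝕜} (hc : 0 ≤ c) (hd : 0 ≤ d) (hst : 0 ≤ s * t)
    (h : c ⬝ᵥ d + s * t = 0) : s = 0 ∨ t = 0 :=
  mul_eq_zero.1 ((add_eq_zero_iff_of_nonneg (dotProduct_nonneg_of_nonneg hc hd) hst).1 h).2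

variable {c d : ι → 𝕜} {a b : ι} {L M : Submodule 𝕜 ((ι → 𝕜) × 𝕜)}

lemma LeadsAt.smul {s : 𝕜} (hs : 0 < s) (hc : LeadsAt c a) : LeadsAt (s • c) a where
  nonneg i := mul_nonneg hs.le (hc.nonneg i)
  pos := mul_pos hs hc.pos
  eq_zero_of_lt i hi := by simp [hc.eq_zero_of_lt i hi]

lemma LeadsAt.add (hc : LeadsAt c a) (hd : LeadsAt d b) (hab : a ≤ b) : LeadsAt (c + d) a where
  nonneg i := add_nonneg (hc.nonneg i) (hd.nonneg i)
  pos := add_pos_of_pos_of_nonneg hc.pos (hd.nonneg a)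
  eq_zero_of_lt i hi := by simp [hc.eq_zero_of_lt i hi, hd.eq_zero_of_lt i (hi.trans_le hab)]

-- A positive combination of the two witnesses cancels the last coordinate and leads at `min a b`.
lemma mem_activeSet_zero_or_mem_activeSet_zero (ha : a ∈ activeSet L (Ici 0))
    (hb : b ∈ activeSet L (Iic 0)) : a ∈ activeSet L {0} ∨ b ∈ activeSet L {0} := by
  obtain ⟨p, hp, hpa, hp2⟩ := ha
  obtain ⟨q, hq, hqb, hq2⟩ := hb
  rcases (mem_Ici.1 hp2).eq_or_lt with hp0 | hp_pos
  · exact Or.inl ⟨p, hp, hpa, hp0.symm⟩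
  rcases (mem_Iic.1 hq2).eq_or_lt with hq0 | hq_neg
  · exact Or.inr ⟨q, hq, hqb, hq0⟩
  have hmem : (-q.2) • p + p.2 • q ∈ L := L.add_mem (L.smul_mem _ hp) (L.smul_mem _ hq)
  have hlast : ((-q.2) • p + p.2 • q).2 = 0 := by
    simp only [Prod.snd_add, Prod.smul_snd, smul_eq_mul]
    ring
  have hpa' := hpa.smul (neg_pos.2 hq_neg)
  have hqb' := hqb.smul hp_pos
  rcases le_total a b with hab | hba
  · exact Or.inl ⟨_, hmem, hpa'.add hqb' hab, hlast⟩
  · exact Or.inr ⟨_, hmem, by simpa [add_comm] using hqb'.add hpa' hba, hlast⟩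

lemma activeSet_zero (L : Submodule 𝕜 ((ι → 𝕜) × 𝕜)) :
    activeSet L {0} = activeSet L (Ici 0) ∩ activeSet L (Iic 0) :=
  Subset.antisymm
    (subset_inter (activeSet_mono L (by simp)) (activeSet_mono L (by simp)))
    fun _ ⟨hpos, hneg⟩ => or_self_iff.1 (mem_activeSet_zero_or_mem_activeSet_zero hpos hneg)

lemma activeSet_Ici_subset_or_Iic_subset (L : Submodule 𝕜 ((ι → 𝕜) × 𝕜)) :
    activeSet L (Ici 0) ⊆ activeSet L (Iic 0) ∨ activeSet L (Iic 0) ⊆ activeSet L (Ici 0) := by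
  by_contra! h
  obtain ⟨⟨a, ha, ha'⟩, ⟨b, hb, hb'⟩⟩ := h.imp not_subset.1 not_subset.1
  have hzero := activeSet_zero L
  rcases mem_activeSet_zero_or_mem_activeSet_zero ha hb with h | h
  · exact ha' (hzero ▸ h).2
  · exact hb' (hzero ▸ h).1

variable [Fintype ι]

lemma activeSet_subset_of_orthogonal {C D : Set 𝕜}
    (hLM : ∀ p ∈ L, ∀ q ∈ M, p.1 ⬝ᵥ q.1 + p.2 * q.2 = 0)
    (hC : ∀ s ∈ C, ∀ t ∈ C, 0 ≤ s * t) (hD : 0 ∈ D) :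
    activeSet L C ⊆ activeSet L D ∨ activeSet M C ⊆ activeSet M D := by
  by_contra! h
  obtain ⟨⟨a, ⟨p, hp, hpa, hpC⟩, ha⟩, ⟨b, ⟨q, hq, hqb, hqC⟩, hb⟩⟩ :=
    h.imp not_subset.1 not_subset.1
  rcases eq_zero_or_eq_zero_of_dotProduct_add_mul_eq_zero hpa.nonneg hqb.nonneg
    (hC _ hpC _ hqC) (hLM p hp q hq) with h0 | h0
  · exact ha ⟨p, hp, hpa, h0 ▸ hD⟩
  · exact hb ⟨q, hq, hqb, h0 ▸ hD⟩

lemma activeSets_nested_of_orthogonal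
    (hLM : ∀ p ∈ L, ∀ q ∈ M, p.1 ⬝ᵥ q.1 + p.2 * q.2 = 0) :
    activeSet L (Ici 0) ⊆ activeSet L (Iic 0) ∧ activeSet M (Iic 0) ⊆ activeSet M (Ici 0) ∨
      activeSet L (Iic 0) ⊆ activeSet L (Ici 0) ∧ activeSet M (Ici 0) ⊆ activeSet M (Iic 0) := by
  have hL := activeSet_Ici_subset_or_Iic_subset L
  have hM := activeSet_Ici_subset_or_Iic_subset M
  have hIci := activeSet_subset_of_orthogonal (C := Ici 0) (D := Iic 0) hLM
    (fun _ hs _ ht => mul_nonneg hs ht) self_mem_Iic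
  have hIic := activeSet_subset_of_orthogonal (C := Iic 0) (D := Ici 0) hLM
    (fun _ hs _ ht => mul_nonneg_of_nonpos_of_nonpos hs ht) self_mem_Ici
  tauto

lemma pow_ncard_activeSet_Ici_add_Iic {R : Type*} [CommSemiring R]
    (hLM : ∀ p ∈ L, ∀ q ∈ M, p.1 ⬝ᵥ q.1 + p.2 * q.2 = 0) (x y : R) :
    x ^ (activeSet M (Ici 0)).ncard * y ^ (activeSet L (Ici 0)).ncard +
        x ^ (activeSet M (Iic 0)).ncard * y ^ (activeSet L (Iic 0)).ncard =
      x ^ (activeSet M univ).ncard * y ^ (activeSet L {0}).ncard +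
        x ^ (activeSet M {0}).ncard * y ^ (activeSet L univ).ncard := by
  simp only [activeSet_univ, activeSet_zero]
  rcases activeSets_nested_of_orthogonal hLM with ⟨hL, hM⟩ | ⟨hL, hM⟩
  · rw [union_eq_left.2 hM, inter_eq_left.2 hL, inter_eq_right.2 hM, union_eq_right.2 hL]
  · rw [union_eq_right.2 hM, inter_eq_right.2 hL, inter_eq_left.2 hM, union_eq_left.2 hL, add_comm]

end ActiveSet

section RelationsCovectors

variable {ι R V : Type*} [CommRing R] [AddCommGroup V] [Module R V]

/-- The linear relations of the configuration `w` extended by the vector `u`, the coefficient of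
`u` being kept as a separate last coordinate. -/
def extRelations [Fintype ι] (w : ι → V) (u : V) : Submodule R ((ι → R) × R) :=
  LinearMap.ker ((Fintype.linearCombination R w).coprod (LinearMap.toSpanSingleton R V u))

/-- The values of the linear functionals on the configuration `w` extended by the vector `u`, the
value at `u` being kept as a separate last coordinate. -/
def extCovectors (w : ι → V) (u : V) : Submodule R ((ι → R) × R) :=
  LinearMap.range
    ((LinearMap.pi fun i => Module.Dual.eval R V (w i)).prod (Module.Dual.eval R V u))

lemma mem_extRelations [Fintype ι] {w : ι → V} {u : V} {p : (ι → R) × R} :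
    p ∈ extRelations w u ↔ (∑ i, p.1 i • w i) + p.2 • u = 0 := by
  simp [extRelations, Fintype.linearCombination_apply]

lemma mem_extCovectors {w : ι → V} {u : V} {p : (ι → R) × R} :
    p ∈ extCovectors w u ↔ ∃ f : V →ₗ[R] R, (fun i => f (w i), f u) = p :=
  Iff.rfl

lemma dotProduct_add_mul_eq_zero_of_mem_extRelations_of_mem_extCovectors [Fintype ι]
    (w : ι → V) (u : V) :
    ∀ p ∈ (extRelations w u : Submodule R _), ∀ q ∈ extCovectors w u,
      p.1 ⬝ᵥ q.1 + p.2 * q.2 = 0 := by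
  rintro p hp _ ⟨f, rfl⟩
  simpa [dotProduct] using congrArg f (mem_extRelations.1 hp)

end RelationsCovectors

section Reorientation

variable {n : ℕ}

lemma sum_finset_fin_succ {R : Type*} [AddCommMonoid R] (F : Finset (Fin (n + 1)) → R) :
    ∑ A, F A = ∑ A : Finset (Fin n),
      (F (A.map Fin.castSuccEmb) + F (insert (Fin.last n) (A.map Fin.castSuccEmb))) := by
  rw [← Finset.powerset_univ, Fin.univ_castSuccEmb, Finset.cons_eq_insert,
    Finset.sum_powerset_insert (by simp), Finset.map_eq_image, Finset.powerset_image,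
    Finset.powerset_univ, Finset.sum_image (Finset.image_injective Fin.castSuccEmb.injective).injOn,
    Finset.sum_image (Finset.image_injective Fin.castSuccEmb.injective).injOn,
    ← Finset.sum_add_distrib]
  simp only [Finset.map_eq_image]

variable {V W : Type*} [AddCommGroup V] [AddCommGroup W]

lemma reorient_snoc_map_castSucc (w : Fin n → V) (u : V) (A : Finset (Fin n)) :
    reorient (Fin.snoc w u : Fin (n + 1) → V) (A.map Fin.castSuccEmb) =
      Fin.snoc (reorient w A) u := by
  ext i
  cases i using Fin.lastCases <;> simp [reorient]

lemma reorient_snoc_insert_last (w : Fin n → V) (u : V) (A : Finset (Fin n)) :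
    reorient (Fin.snoc w u : Fin (n + 1) → V) (insert (Fin.last n) (A.map Fin.castSuccEmb)) =
      Fin.snoc (reorient w A) (-u) := by
  ext i
  cases i using Fin.lastCases <;> simp [reorient]

lemma reorient_comp {F : Type*} [FunLike F V W] [AddMonoidHomClass F V W] (g : F)
    (w : Fin n → V) (A : Finset (Fin n)) : reorient (g ∘ w) A = g ∘ reorient w A := by
  ext i
  simp [reorient, apply_ite g]

end Reorientation

section Activity

variable {n : ℕ} {V : Type*} [AddCommGroup V] [Module ℝ V]

lemma exists_fin_succ_arrow_iff_snoc {α : Type*} {P : (Fin (n + 1) → α) → Prop} :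
    (∃ c, P c) ↔ ∃ (c : Fin n → α) (t : α), P (Fin.snoc c t) := by
  rw [(Fin.snocEquiv fun _ => α).surjective.exists, Prod.exists, exists_comm]
  rfl

lemma leadsAt_snoc_castSucc_iff {𝕜 : Type*} [CommRing 𝕜] [LinearOrder 𝕜] {c : Fin n → 𝕜} {t : 𝕜}
    {a : Fin n} : LeadsAt (Fin.snoc c t : Fin (n + 1) → 𝕜) a.castSucc ↔ LeadsAt c a ∧ 0 ≤ t := by
  constructor
  · rintro ⟨h0, ha, hlt⟩
    exact ⟨⟨fun i => by simpa using h0 i.castSucc, by simpa using ha,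
      fun i hi => by simpa using hlt i.castSucc hi⟩, by simpa using h0 (Fin.last n)⟩
  · rintro ⟨⟨h0, ha, hlt⟩, ht⟩
    refine ⟨Fin.lastCases (by simpa using ht) fun i => by simpa using h0 i, by simpa using ha,
      Fin.lastCases (fun h => absurd h (Fin.le_last _).not_gt) fun i hi => ?_⟩
    simpa using hlt i hi

lemma oActive_iff_exists_leadsAt {w : Fin n → V} {a : Fin n} :
    OActive w a ↔ ∃ c : Fin n → ℝ, ∑ i, c i • w i = 0 ∧ LeadsAt c a :=
  ⟨fun ⟨c, h0, hsum, ha, hlt⟩ => ⟨c, hsum, h0, ha, hlt⟩,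
    fun ⟨c, hsum, h0, ha, hlt⟩ => ⟨c, h0, hsum, ha, hlt⟩⟩

lemma oDualActive_iff_exists_leadsAt {w : Fin n → V} {a : Fin n} :
    ODualActive w a ↔ ∃ f : V →ₗ[ℝ] ℝ, LeadsAt (fun i => f (w i)) a :=
  ⟨fun ⟨f, h0, ha, hlt⟩ => ⟨f, h0, ha, hlt⟩, fun ⟨f, h0, ha, hlt⟩ => ⟨f, h0, ha, hlt⟩⟩

lemma ofPred_oActive_snoc_castSucc (w : Fin n → V) (u : V) :
    {a : Fin n | OActive (Fin.snoc w u : Fin (n + 1) → V) a.castSucc} =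
      activeSet (extRelations w u) (Ici (0 : ℝ)) := by
  ext a
  simp only [mem_ofPred_eq, oActive_iff_exists_leadsAt, activeSet, mem_extRelations, Prod.exists,
    mem_Ici, exists_fin_succ_arrow_iff_snoc, Fin.sum_univ_castSucc, Fin.snoc_castSucc,
    Fin.snoc_last, leadsAt_snoc_castSucc_iff]

lemma ofPred_oActive_snoc_neg_castSucc (w : Fin n → V) (u : V) :
    {a : Fin n | OActive (Fin.snoc w (-u) : Fin (n + 1) → V) a.castSucc} =
      activeSet (extRelations w u) (Iic (0 : ℝ)) := by
  rw [ofPred_oActive_snoc_castSucc]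
  ext a
  simp only [activeSet, mem_ofPred_eq, mem_extRelations, Prod.exists, mem_Ici, mem_Iic]
  refine exists_congr fun c => (Equiv.neg ℝ).exists_congr fun t => ?_
  simp

lemma ofPred_oActive_eq_activeSet (w : Fin n → V) (u : V) :
    {a | OActive w a} = activeSet (extRelations w u) {(0 : ℝ)} := by
  ext a
  simp [oActive_iff_exists_leadsAt, activeSet, mem_extRelations]

lemma ofPred_oActive_mkQ (w : Fin n → V) (u : V) :
    {a | OActive ((span ℝ {u}).mkQ ∘ w) a} = activeSet (extRelations w u) (univ : Set ℝ) := by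
  ext a
  have hsum (c : Fin n → ℝ) : ∑ i, c i • ((span ℝ {u}).mkQ ∘ w) i = 0 ↔
      ∃ t : ℝ, ∑ i, c i • w i + t • u = 0 := by
    simp only [Function.comp_apply, ← map_smul, ← map_sum, ← LinearMap.mem_ker, ker_mkQ,
      mem_span_singleton]
    refine (Equiv.neg ℝ).exists_congr fun t => ?_
    rw [Equiv.neg_apply, neg_smul, add_neg_eq_zero, eq_comm]
  simp only [mem_ofPred_eq, oActive_iff_exists_leadsAt, hsum, activeSet, mem_extRelations,
    Prod.exists, mem_univ, and_true, exists_and_right]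

lemma ofPred_oDualActive_snoc_castSucc (w : Fin n → V) (u : V) :
    {a : Fin n | ODualActive (Fin.snoc w u : Fin (n + 1) → V) a.castSucc} =
      activeSet (extCovectors w u) (Ici (0 : ℝ)) := by
  ext a
  have hsnoc (f : V →ₗ[ℝ] ℝ) : (fun i => f ((Fin.snoc w u : Fin (n + 1) → V) i)) =
      Fin.snoc (fun i => f (w i)) (f u) := Fin.comp_snoc f w u
  simp [oDualActive_iff_exists_leadsAt, hsnoc, leadsAt_snoc_castSucc_iff, activeSet,
    mem_extCovectors]

lemma ofPred_oDualActive_snoc_neg_castSucc (w : Fin n → V) (u : V) :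
    {a : Fin n | ODualActive (Fin.snoc w (-u) : Fin (n + 1) → V) a.castSucc} =
      activeSet (extCovectors w u) (Iic (0 : ℝ)) := by
  rw [ofPred_oDualActive_snoc_castSucc]
  ext a
  simp [activeSet, mem_extCovectors]

lemma ofPred_oDualActive_eq_activeSet (w : Fin n → V) (u : V) :
    {a | ODualActive w a} = activeSet (extCovectors w u) (univ : Set ℝ) := by
  ext a
  simp [oDualActive_iff_exists_leadsAt, activeSet, mem_extCovectors]

lemma ofPred_oDualActive_mkQ (w : Fin n → V) (u : V) :
    {a | ODualActive ((span ℝ {u}).mkQ ∘ w) a} = activeSet (extCovectors w u) {(0 : ℝ)} := by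
  ext a
  simp only [mem_ofPred_eq, oDualActive_iff_exists_leadsAt, activeSet, mem_extCovectors,
    exists_exists_eq_and, mem_singleton_iff]
  constructor
  · rintro ⟨f, hf⟩
    refine ⟨f ∘ₗ (span ℝ {u}).mkQ, hf, ?_⟩
    rw [LinearMap.comp_apply, mkQ_apply, (Quotient.mk_eq_zero _).2 (mem_span_singleton_self u),
      map_zero]
  · rintro ⟨f, hf, hfu⟩
    exact ⟨(span ℝ {u}).liftQ f ((span_singleton_le_iff_mem _ _).2 hfu), hf⟩

lemma oActive_snoc_last_iff {w : Fin n → V} {u : V} :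
    OActive (Fin.snoc w u : Fin (n + 1) → V) (Fin.last n) ↔ u = 0 := by
  constructor
  · rintro ⟨c, -, hsum, hpos, hlt⟩
    have hcu : c (Fin.last n) • u = 0 := by
      simpa [Fin.sum_univ_castSucc, hlt _ (Fin.castSucc_lt_last _)] using hsum
    exact (smul_eq_zero.1 hcu).resolve_left hpos.ne'
  · rintro rfl
    have hnonneg : (0 : Fin (n + 1) → ℝ) ≤ Pi.single (Fin.last n) 1 :=
      Pi.single_nonneg.2 zero_le_one
    exact ⟨Pi.single (Fin.last n) 1, hnonneg, by simp [Pi.single_apply], by simp,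
      fun i hi => Pi.single_eq_of_ne hi.ne _⟩

lemma oDualActive_snoc_last_iff {w : Fin n → V} {u : V} :
    ODualActive (Fin.snoc w u : Fin (n + 1) → V) (Fin.last n) ↔ u ∉ span ℝ (range w) := by
  constructor
  · rintro ⟨f, -, hpos, hlt⟩ hu
    have hker : span ℝ (range w) ≤ LinearMap.ker f := by
      rw [span_le, range_subset_iff]
      intro i
      simpa using hlt _ (Fin.castSucc_lt_last i)
    have hfu : f u = 0 := hker hu
    simp [hfu] at hpos
  · intro hu
    obtain ⟨f, hfu, hker⟩ := Submodule.exists_le_ker_of_notMem hu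
    have hfw (i : Fin n) : f (w i) = 0 := hker (subset_span (mem_range_self i))
    refine ⟨f u • f, fun i => ?_, by simpa using hfu, fun i hi => ?_⟩
    · cases i using Fin.lastCases with
      | last => simpa using mul_self_nonneg (f u)
      | cast i => simp [hfw]
    · obtain ⟨i, rfl⟩ := Fin.exists_castSucc_eq.2 hi.ne
      simp [hfw]

open Classical in
lemma ncard_eq_ncard_preimage_castSucc_add (s : Set (Fin (n + 1))) :
    s.ncard = (Fin.castSucc ⁻¹' s).ncard + if Fin.last n ∈ s then 1 else 0 := by
  simp only [Set.ncard_eq_toFinset_card', ← Set.filter_mem_univ_eq_toFinset, Finset.card_filter,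
    Fin.sum_univ_castSucc, mem_preimage]

open Classical in
lemma ncard_ofPred_oActive_snoc (w : Fin n → V) (u : V) :
    {a | OActive (Fin.snoc w u : Fin (n + 1) → V) a}.ncard =
      {a : Fin n | OActive (Fin.snoc w u : Fin (n + 1) → V) a.castSucc}.ncard +
        if u = 0 then 1 else 0 := by
  simp only [ncard_eq_ncard_preimage_castSucc_add, preimage_ofPred_eq, mem_ofPred_eq,
    oActive_snoc_last_iff]

open Classical in
lemma ncard_ofPred_oDualActive_snoc (w : Fin n → V) (u : V) :
    {a | ODualActive (Fin.snoc w u : Fin (n + 1) → V) a}.ncard =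
      {a : Fin n | ODualActive (Fin.snoc w u : Fin (n + 1) → V) a.castSucc}.ncard +
        if u ∈ span ℝ (range w) then 0 else 1 := by
  simp only [ncard_eq_ncard_preimage_castSucc_add, preimage_ofPred_eq, mem_ofPred_eq,
    oDualActive_snoc_last_iff, ite_not]

open Classical in
lemma pow_ncard_active_snoc_add_snoc_neg {R : Type*} [CommSemiring R]
    (w : Fin n → V) (u : V) (x y : R) :
    x ^ {a | ODualActive (Fin.snoc w u : Fin (n + 1) → V) a}.ncard *
          y ^ {a | OActive (Fin.snoc w u : Fin (n + 1) → V) a}.ncard +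
        x ^ {a | ODualActive (Fin.snoc w (-u) : Fin (n + 1) → V) a}.ncard *
          y ^ {a | OActive (Fin.snoc w (-u) : Fin (n + 1) → V) a}.ncard =
      (if u ∈ span ℝ (range w) then 1 else x) * (if u = 0 then y else 1) *
        (x ^ {a | ODualActive w a}.ncard * y ^ {a | OActive w a}.ncard +
          x ^ {a | ODualActive ((span ℝ {u}).mkQ ∘ w) a}.ncard *
            y ^ {a | OActive ((span ℝ {u}).mkQ ∘ w) a}.ncard) := by
  have key := pow_ncard_activeSet_Ici_add_Iic (𝕜 := ℝ)
    (dotProduct_add_mul_eq_zero_of_mem_extRelations_of_mem_extCovectors w u) x y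
  rw [ofPred_oDualActive_eq_activeSet w u, ofPred_oActive_eq_activeSet w u, ofPred_oDualActive_mkQ,
    ofPred_oActive_mkQ, ← key]
  simp only [ncard_ofPred_oActive_snoc, ncard_ofPred_oDualActive_snoc,
    ofPred_oActive_snoc_castSucc w u, ofPred_oActive_snoc_neg_castSucc,
    ofPred_oDualActive_snoc_castSucc w u, ofPred_oDualActive_snoc_neg_castSucc, neg_mem_iff,
    neg_eq_zero, pow_add, pow_ite, pow_zero, pow_one]
  ring

lemma span_range_reorient (v : Fin n → V) (A : Finset (Fin n)) :
    span ℝ (range (reorient v A)) = span ℝ (range v) := by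
  apply le_antisymm <;> rw [span_le, range_subset_iff] <;> intro i
  · have hi : v i ∈ span ℝ (range v) := subset_span (mem_range_self i)
    unfold reorient
    split_ifs
    exacts [neg_mem hi, hi]
  · have hi : reorient v A i ∈ span ℝ (range (reorient v A)) := subset_span (mem_range_self i)
    unfold reorient at hi ⊢
    split_ifs at hi
    exacts [neg_mem_iff.1 hi, hi]

open Classical in
lemma sum_pow_oStarCount_mul_pow_oCount_snoc {R : Type*} [CommSemiring R]
    (w : Fin n → V) (u : V) (x y : R) :
    ∑ A, x ^ oStarCount (Fin.snoc w u : Fin (n + 1) → V) A *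
        y ^ oCount (Fin.snoc w u : Fin (n + 1) → V) A =
      (if u ∈ span ℝ (range w) then 1 else x) * (if u = 0 then y else 1) *
        (∑ A, x ^ oStarCount w A * y ^ oCount w A +
          ∑ A, x ^ oStarCount ((span ℝ {u}).mkQ ∘ w) A *
            y ^ oCount ((span ℝ {u}).mkQ ∘ w) A) := by
  simp only [sum_finset_fin_succ, ← Finset.sum_add_distrib, Finset.mul_sum, oStarCount, oCount,
    reorient_snoc_map_castSucc, reorient_snoc_insert_last, reorient_comp,
    pow_ncard_active_snoc_add_snoc_neg, span_range_reorient]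

end Activity

section Rank

lemma finrank_sup_eq_finrank_map_mkQ_add {K V : Type*} [DivisionRing K] [AddCommGroup V]
    [Module K V] (P Q : Submodule K V) [FiniteDimensional K P] [FiniteDimensional K Q] :
    Module.finrank K ↥(P ⊔ Q) = Module.finrank K (P.map Q.mkQ) + Module.finrank K Q := by
  rw [← LinearMap.finrank_range_add_finrank_ker (Q.mkQ.domRestrict (P ⊔ Q)),
    LinearMap.range_domRestrict, LinearMap.ker_domRestrict, ker_mkQ, Submodule.map_sup,
    Submodule.mkQ_map_self, sup_bot_eq, (comapSubtypeEquivOfLe le_sup_right).finrank_eq]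

lemma finrank_map_of_disjoint_ker {K V W : Type*} [DivisionRing K] [AddCommGroup V] [Module K V]
    [AddCommGroup W] [Module K W] {g : V →ₗ[K] W} {P : Submodule K V}
    (h : Disjoint P (LinearMap.ker g)) : Module.finrank K (P.map g) = Module.finrank K P := by
  rw [← LinearMap.range_domRestrict]
  exact LinearMap.finrank_range_of_inj (LinearMap.injective_domRestrict_iff.2 h)

variable {n : ℕ} {V W : Type*} [AddCommGroup V] [Module ℝ V] [AddCommGroup W] [Module ℝ W]

lemma vrank_mono (v : Fin n → V) {S T : Set (Fin n)} (h : S ⊆ T) : vrank v S ≤ vrank v T :=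
  have := FiniteDimensional.span_of_finite ℝ (T.toFinite.image v)
  Submodule.finrank_mono (span_mono (image_mono h))

lemma vrank_le_card (v : Fin n → V) (A : Finset (Fin n)) : vrank v A ≤ A.card := by
  classical
  rw [vrank, ← Finset.coe_image]
  exact (finrank_span_finset_le_card _).trans Finset.card_image_le

lemma vrank_comp_of_disjoint_ker {g : V →ₗ[ℝ] W} {w : Fin n → V}
    (h : Disjoint (span ℝ (range w)) (LinearMap.ker g)) (S : Set (Fin n)) :
    vrank (g ∘ w) S = vrank w S := by
  rw [vrank, image_comp, ← map_span]
  exact finrank_map_of_disjoint_ker (h.mono_left (span_mono (image_subset_range w S)))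

lemma vrank_snoc_image_castSucc (w : Fin n → V) (u : V) (S : Set (Fin n)) :
    vrank (Fin.snoc w u : Fin (n + 1) → V) (Fin.castSucc '' S) = vrank w S := by
  rw [vrank, vrank, ← image_comp, Fin.snoc_comp_castSucc]

lemma vrank_snoc_insert_last (w : Fin n → V) (u : V) (S : Set (Fin n)) :
    vrank (Fin.snoc w u : Fin (n + 1) → V) (insert (Fin.last n) (Fin.castSucc '' S)) =
      vrank ((span ℝ {u}).mkQ ∘ w) S + Module.finrank ℝ (span ℝ {u}) := by
  have := FiniteDimensional.span_of_finite ℝ (S.toFinite.image w)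
  rw [vrank, vrank, image_comp, ← map_span, ← finrank_sup_eq_finrank_map_mkQ_add, ← span_union,
    union_singleton, image_insert_eq, ← image_comp, Fin.snoc_comp_castSucc, Fin.snoc_last]

lemma vrank_snoc_univ_eq_mkQ (w : Fin n → V) (u : V) :
    vrank (Fin.snoc w u : Fin (n + 1) → V) univ =
      vrank ((span ℝ {u}).mkQ ∘ w) univ + Module.finrank ℝ (span ℝ {u}) := by
  have huniv : insert (Fin.last n) (Fin.castSucc '' univ) = univ := by
    ext i
    cases i using Fin.lastCases <;> simp
  rw [← vrank_snoc_insert_last, huniv]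

open Classical in
lemma finrank_span_singleton_eq_ite (u : V) :
    Module.finrank ℝ (span ℝ {u}) = if u = 0 then 0 else 1 := by
  split_ifs with h
  · simp [h]
  · exact finrank_span_singleton h

lemma disjoint_span_range_ker_mkQ_iff {w : Fin n → V} {u : V} :
    Disjoint (span ℝ (range w)) (LinearMap.ker (span ℝ {u}).mkQ) ↔
      u ∈ span ℝ (range w) → u = 0 := by
  rw [ker_mkQ, disjoint_span_singleton]

open Classical in
lemma vrank_snoc_univ (w : Fin n → V) (u : V) :
    vrank (Fin.snoc w u : Fin (n + 1) → V) univ =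
      vrank w univ + if u ∈ span ℝ (range w) then 0 else 1 := by
  split_ifs with hu
  · rw [vrank, vrank, image_univ, image_univ, Fin.range_snoc, span_insert_eq_span hu, add_zero]
  · rw [vrank_snoc_univ_eq_mkQ, finrank_span_singleton (by rintro rfl; exact hu (zero_mem _)),
      vrank_comp_of_disjoint_ker (disjoint_span_range_ker_mkQ_iff.2 fun h => absurd h hu)]

lemma tutteV_comp_of_disjoint_ker {g : V →ₗ[ℝ] W} {w : Fin n → V}
    (h : Disjoint (span ℝ (range w)) (LinearMap.ker g)) (x y : ℝ) :
    tutteV (g ∘ w) x y = tutteV w x y := by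
  simp only [tutteV, vrank_comp_of_disjoint_ker h]

open Classical in
lemma tutteV_snoc (w : Fin n → V) (u : V) (x y : ℝ) :
    tutteV (Fin.snoc w u : Fin (n + 1) → V) x y =
      (if u ∈ span ℝ (range w) then 1 else x - 1) * tutteV w x y +
        (if u = 0 then y - 1 else 1) * tutteV ((span ℝ {u}).mkQ ∘ w) x y := by
  rw [tutteV, sum_finset_fin_succ, Finset.sum_add_distrib, tutteV, tutteV, Finset.mul_sum,
    Finset.mul_sum]
  congr 1 <;> refine Finset.sum_congr rfl fun A _ => ?_
  · have hcorank : vrank (Fin.snoc w u : Fin (n + 1) → V) univ - vrank w A =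
        (if u ∈ span ℝ (range w) then 0 else 1) + (vrank w univ - vrank w A) := by
      have := vrank_mono w (subset_univ (A : Set (Fin n)))
      rw [vrank_snoc_univ]
      lia
    rw [Finset.card_map, Finset.coe_map, Fin.coe_castSuccEmb, vrank_snoc_image_castSucc, hcorank,
      pow_add, pow_ite, pow_zero, pow_one, mul_assoc]
  · have hnullity : A.card + 1 -
        (vrank ((span ℝ {u}).mkQ ∘ w) A + Module.finrank ℝ (span ℝ {u})) =
          (if u = 0 then 1 else 0) + (A.card - vrank ((span ℝ {u}).mkQ ∘ w) A) := by
      have := vrank_le_card ((span ℝ {u}).mkQ ∘ w) A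
      rw [finrank_span_singleton_eq_ite]
      split_ifs <;> lia
    rw [Finset.card_insert_of_notMem (by simp), Finset.card_map, Finset.coe_insert,
      Finset.coe_map, Fin.coe_castSuccEmb, vrank_snoc_insert_last, vrank_snoc_univ_eq_mkQ,
      Nat.add_sub_add_right, hnullity, pow_add, pow_ite, pow_zero, pow_one, mul_left_comm]

end Rank

theorem statement7_general {n : ℕ} {V : Type*} [AddCommGroup V] [Module ℝ V]
    (v : Fin n → V) (x y : ℝ) :
    tutteV v (2 * x) (2 * y) =
      ∑ A : Finset (Fin n), x ^ oStarCount v A * y ^ oCount v A := by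
  induction n generalizing V with
  | zero =>
    simp [tutteV, Finset.eq_empty_of_isEmpty, oStarCount, oCount, eq_empty_of_isEmpty]
  | succ n ih =>
    cases v using Fin.snocCases with | snoc w u
    rw [tutteV_snoc, sum_pow_oStarCount_mul_pow_oCount_snoc, ← ih, ← ih]
    by_cases h : u ∈ span ℝ (range w) → u = 0
    · rw [tutteV_comp_of_disjoint_ker (disjoint_span_range_ker_mkQ_iff.2 h)]
      split_ifs with hu hu0 hu0
      · ring
      · exact absurd (h hu) hu0
      · exact absurd (hu0 ▸ zero_mem _) hu
      · ring
    · obtain ⟨hu, hu0⟩ := Classical.not_imp.1 h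
      simp [hu, hu0]

/-- 2-variable orientation-activity expansion of the Tutte polynomial:
`t(2x, 2y) = ∑_{A ⊆ Fin n} x^o*(A) · y^o(A)`. -/
theorem statement7 {n : ℕ} {V : Type*} [AddCommGroup V] [Module ℝ V] [FiniteDimensional ℝ V]
    (v : Fin n → V) (x y : ℝ) :
    tutteV v (2 * x) (2 * y) =
      ∑ A : Finset (Fin n), x ^ oStarCount v A * y ^ oCount v A :=
  statement7_general v x y
end
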